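/- Let k be a field, d an even integer with d ≥ 4, and m an integer with d+1 < m; set a = (d+2)/2. In R = k[x_1,…,x_m,z] let I = I_{a,1,m−1} + I_{a,2,m} and J = I_{a−1,2,m−1} + z·I_{a−2,3,m−2}, and let J̄ denote the image of J in R/I, an ideal of R/I regarded as an R/I-module. Then the R/I-linear map Θ : R/I → Hom_{R/I}(J̄, R/I) sending r to the multiplication-by-r map is injective, and its cokernel is isomorphic as an R/I-module to R/J. -/

import Mathlib

/-- The variable `x_t` (1-indexed, for `1 ≤ t ≤ n`) of the polynomial ring
`k[x_1, …, x_n]`, realized as `MvPolynomial (Fin n) k`. -/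
noncomputable def Xv (k : Type*) [Field k] (n t : ℕ) : MvPolynomial (Fin n) k :=
  if h : 1 ≤ t ∧ t ≤ n then MvPolynomial.X ⟨t - 1, by omega⟩ else 0

/-- The ideal `I_{a,p,q}` of `k[x_1, …, x_n]`, generated by the squarefree monomials
`x_{t_1} ⋯ x_{t_a}` with `p ≤ t_1 < t_2 < ⋯ < t_a ≤ q` and `t_{j+1} ≥ t_j + 2`. -/
noncomputable def idealI (k : Type*) [Field k] (n a p q : ℕ) :
    Ideal (MvPolynomial (Fin n) k) :=
  Ideal.span { f | ∃ t : ℕ → ℕ, p ≤ t 0 ∧ t (a - 1) ≤ q ∧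
    (∀ j, j + 1 < a → t j + 2 ≤ t (j + 1)) ∧
    f = ∏ j ∈ Finset.range a, Xv k n (t j) }

set_option synthInstance.maxHeartbeats 1000000
set_option maxHeartbeats 1000000

def Sp (n p q : ℕ) (u : Finset ℕ) : Prop :=
  u.card = n ∧ (∀ x ∈ u, p ≤ x ∧ x ≤ q) ∧ ∀ x ∈ u, ∀ y ∈ u, x < y → x + 2 ≤ y

def Has (W : Set ℕ) (n p q : ℕ) : Prop := ∃ u, Sp n p q u ∧ ∀ x ∈ u, x ∈ W

def Cov (P : Finset ℕ) (x : ℕ) : Prop := x ∈ P ∨ ∃ y ∈ P, x = y + 1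

theorem Sp.cons {n p q t : ℕ} {u : Finset ℕ} (h : Sp n (t + 2) q u) (h1 : p ≤ t) (h2 : t ≤ q) :
    Sp (n + 1) p q (insert t u) := by
  obtain ⟨hc, hb, hs⟩ := h
  have htu : t ∉ u := fun h => by have := hb t h; omega
  refine ⟨by rw [Finset.card_insert_of_notMem htu, hc], ?_, ?_⟩
  · intro x hx
    rcases Finset.mem_insert.1 hx with rfl | hx
    · exact ⟨h1, h2⟩
    · have := hb x hx; omega
  · intro x hx y hy hxy
    rcases Finset.mem_insert.1 hx with h3 | h3 <;> rcases Finset.mem_insert.1 hy with h4 | h4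
    · omega
    · have := hb y h4; omega
    · have := hb x h3; omega
    · exact hs x h3 y h4 hxy

theorem Sp.peel {n p q : ℕ} {u : Finset ℕ} (h : Sp (n + 1) p q u) :
    ∃ t u', u = insert t u' ∧ p ≤ t ∧ t ≤ q ∧ t ∈ u ∧ Sp n (t + 2) q u' := by
  obtain ⟨hc, hb, hs⟩ := h
  have hne : u.Nonempty := by rw [← Finset.card_pos]; omega
  have hm := u.min'_mem hne
  refine ⟨u.min' hne, u.erase (u.min' hne), (Finset.insert_erase hm).symm, (hb _ hm).1,
    (hb _ hm).2, hm, ?_, ?_, ?_⟩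
  · rw [Finset.card_erase_of_mem hm]; omega
  · intro x hx
    obtain ⟨hx1, hx2⟩ := Finset.mem_erase.1 hx
    have := u.min'_le x hx2
    exact ⟨hs _ hm _ hx2 (by omega), (hb x hx2).2⟩
  · intro x hx y hy
    exact hs x (Finset.mem_of_mem_erase hx) y (Finset.mem_of_mem_erase hy)

theorem Sp.mono {n p q p' q' : ℕ} {u : Finset ℕ} (h : Sp n p q u)
    (hp : ∀ x ∈ u, p' ≤ x) (hq : ∀ x ∈ u, x ≤ q') : Sp n p' q' u :=
  ⟨h.1, fun x hx => ⟨hp x hx, hq x hx⟩, h.2.2⟩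

theorem Sp.union {n n' p q p' q' : ℕ} {u u' : Finset ℕ} (h : Sp n p q u) (h' : Sp n' p' q' u')
    (hq : q + 2 ≤ p') (h1 : p ≤ p') (h2 : q ≤ q') : Sp (n + n') p q' (u ∪ u') := by
  obtain ⟨hc, hb, hs⟩ := h
  obtain ⟨hc', hb', hs'⟩ := h'
  refine ⟨?_, ?_, ?_⟩
  · rw [Finset.card_union_of_disjoint, hc, hc']
    rw [Finset.disjoint_left]
    intro x hx hx'
    have := hb x hx; have := hb' x hx'; omega
  · intro x hx
    rcases Finset.mem_union.1 hx with hx | hx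
    · have := hb x hx; omega
    · have := hb' x hx; omega
  · intro x hx y hy hxy
    rcases Finset.mem_union.1 hx with hx | hx <;> rcases Finset.mem_union.1 hy with hy | hy
    · exact hs x hx y hy hxy
    · have := hb x hx; have := hb' y hy; omega
    · have := hb' x hx; have := hb y hy; omega
    · exact hs' x hx y hy hxy

theorem Sp.cap {n p q : ℕ} {u : Finset ℕ} (h : Sp (n + 1) p q u) : p + 2 * n ≤ q := by
  induction n generalizing p u with
  | zero => obtain ⟨t, _, _, h1, h2, _⟩ := h.peel; omega
  | succ n ih =>
    obtain ⟨t, u', _, h1, h2, _, h3⟩ := h.peel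
    have := ih h3
    omega

theorem Sp.zero {p q : ℕ} {u : Finset ℕ} (h : Sp 0 p q u) : u = ∅ := Finset.card_eq_zero.1 h.1

theorem sp_empty (p q : ℕ) : Sp 0 p q ∅ := ⟨rfl, by simp, by simp⟩

theorem pigeon {n p q n' p' q' : ℕ} {T P : Finset ℕ} (hT : Sp n p q T) (hP : Sp n' p' q' P)
    (h : ∀ x ∈ T, Cov P x) : n ≤ n' := by
  rw [← hT.1, ← hP.1]
  refine Finset.card_le_card_of_injOn (fun x => if x ∈ P then x else x - 1) ?_ ?_
  · intro x hx
    by_cases hxP : x ∈ P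
    · simp [hxP]
    · rcases h x hx with h1 | ⟨y, hy, rfl⟩
      · exact absurd h1 hxP
      · simp [hxP, hy]
  · intro x hx y hy hxy
    have hs := hT.2.2
    have h1 := hs x hx y hy
    have h2 := hs y hy x hx
    have hx' := h x hx
    have hy' := h y hy
    simp only at hxy
    unfold Cov at hx' hy'
    split_ifs at hxy <;> grind

theorem cov_insert {P : Finset ℕ} {p x : ℕ} :
    Cov (insert p P) x ↔ x = p ∨ x = p + 1 ∨ Cov P x := by
  unfold Cov
  simp only [Finset.mem_insert, exists_eq_or_imp]
  tauto

theorem cov_union {P Q : Finset ℕ} {x : ℕ} :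
    Cov (P ∪ Q) x ↔ Cov P x ∨ Cov Q x := by
  unfold Cov
  constructor
  · rintro (h | ⟨y, hy, rfl⟩)
    · rcases Finset.mem_union.1 h with h | h
      · exact Or.inl (Or.inl h)
      · exact Or.inr (Or.inl h)
    · rcases Finset.mem_union.1 hy with h | h
      · exact Or.inl (Or.inr ⟨y, h, rfl⟩)
      · exact Or.inr (Or.inr ⟨y, h, rfl⟩)
  · rintro ((h | ⟨y, hy, rfl⟩) | (h | ⟨y, hy, rfl⟩))
    · exact Or.inl (Finset.mem_union_left _ h)
    · exact Or.inr ⟨y, Finset.mem_union_left _ hy, rfl⟩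
    · exact Or.inl (Finset.mem_union_right _ h)
    · exact Or.inr ⟨y, Finset.mem_union_right _ hy, rfl⟩

theorem cover (W : Set ℕ) (r : ℕ) : ∀ k n p : ℕ, r + 2 ≤ p + k → p + 2 * n ≤ r + 2 →
    ¬ Has W (n + 1) p (r + 1) →
    ∃ P, Sp n p r P ∧ ∀ x ∈ W, p ≤ x → x ≤ r + 1 → Cov P x := by
  intro k
  induction k using Nat.strong_induction_on with
  | _ k ih =>
    intro n p hk hn hW
    rcases n with _ | n
    · refine ⟨∅, sp_empty _ _, fun x hx h1 h2 => ?_⟩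
      exact absurd ⟨{x}, by simpa using (sp_empty (x + 2) (r + 1)).cons h1 h2, by simpa using hx⟩ hW
    · by_cases hp : p ∈ W ∨ p + 2 * (n + 1) = r + 2
      · obtain ⟨P, hP, hc⟩ := ih (k - 2) (by omega) n (p + 2) (by omega) (by omega) (by
          rintro ⟨u, hu, huW⟩
          rcases hp with hp | hp
          · exact hW ⟨insert p u, hu.cons le_rfl (by omega), by
              intro x hx
              rcases Finset.mem_insert.1 hx with rfl | hx
              · exact hp
              · exact huW x hx⟩
          · have := hu.cap
            omega)
        refine ⟨insert p P, hP.cons le_rfl (by omega), fun x hx h1 h2 => ?_⟩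
        rcases (by omega : x = p ∨ x = p + 1 ∨ p + 2 ≤ x) with rfl | rfl | h3
        · exact Or.inl (Finset.mem_insert_self _ _)
        · exact Or.inr ⟨p, Finset.mem_insert_self _ _, rfl⟩
        · rcases hc x hx h3 h2 with h | ⟨y, hy, rfl⟩
          · exact Or.inl (Finset.mem_insert_of_mem h)
          · exact Or.inr ⟨y, Finset.mem_insert_of_mem hy, rfl⟩
      · rw [not_or] at hp
        obtain ⟨P, hP, hc⟩ := ih (k - 1) (by omega) (n + 1) (p + 1) (by omega) (by omega) (by
          rintro ⟨u, hu, huW⟩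
          exact hW ⟨u, hu.mono (fun x hx => by have := hu.2.1 x hx; omega)
            (fun x hx => (hu.2.1 x hx).2), huW⟩)
        refine ⟨P, hP.mono (fun x hx => by have := hP.2.1 x hx; omega)
            (fun x hx => (hP.2.1 x hx).2), fun x hx h1 h2 => hc x hx ?_ h2⟩
        rcases h1.eq_or_lt with rfl | h
        · exact absurd hx hp.1
        · exact h

theorem shift (r : ℕ) : ∀ n p : ℕ, p + 2 * n ≤ r + 1 → ∀ P, Sp n p r P →
    ∃ P2, Sp n (p + 1) r P2 ∧ (∀ x ∈ P2, Cov P x) ∧ ∀ x, Cov P x → x = p ∨ Cov P2 x := by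
  intro n
  induction n with
  | zero =>
    intro p _ P hP
    exact ⟨P, by rw [hP.zero]; exact sp_empty _ _, fun x hx => Or.inl hx, fun x hx => Or.inr hx⟩
  | succ n ih =>
    intro p hp P hP
    obtain ⟨t, P', rfl, h1, h2, h3, h4⟩ := hP.peel
    rcases h1.eq_or_lt with rfl | h1
    · obtain ⟨Q, hQ, hQ1, hQ2⟩ := ih (p + 2) (by omega) P' h4
      refine ⟨insert (p + 1) Q, hQ.cons le_rfl (by omega), ?_, ?_⟩
      · intro x hx
        rw [cov_insert]
        rcases Finset.mem_insert.1 hx with h | h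
        · exact Or.inr (Or.inl h)
        · exact Or.inr (Or.inr (hQ1 x h))
      · intro x hx
        rw [cov_insert] at hx ⊢
        rcases hx with h | h | h
        · exact Or.inl h
        · exact Or.inr (Or.inl h)
        · rcases hQ2 x h with h | h
          · exact Or.inr (Or.inr (Or.inl (by omega)))
          · exact Or.inr (Or.inr (Or.inr h))
    · exact ⟨_, hP.mono (fun x hx => by
        rcases Finset.mem_insert.1 hx with rfl | hx
        · exact h1
        · have := h4.2.1 x hx; omega) (fun x hx => (hP.2.1 x hx).2), fun x hx => Or.inl hx,
        fun x hx => Or.inr hx⟩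

theorem conn {X : Type*} (W : Set ℕ) (r : ℕ) : ∀ k n p : ℕ, r + 2 ≤ p + k →
    ∀ F : Finset ℕ → X,
    (∀ P P2 u, Sp n p r P → (∀ x ∈ W, p ≤ x → x ≤ r + 1 → Cov P x) →
      Sp n p r P2 → (∀ x ∈ W, p ≤ x → x ≤ r + 1 → Cov P2 x) →
      Sp n (p + 1) r u → (∀ x ∈ u, Cov P x) → (∀ x ∈ u, Cov P2 x) → F P = F P2) →
    ∀ P P2, Sp n p r P → (∀ x ∈ W, p ≤ x → x ≤ r + 1 → Cov P x) →
      Sp n p r P2 → (∀ x ∈ W, p ≤ x → x ≤ r + 1 → Cov P2 x) → F P = F P2 := by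
  intro k
  induction k using Nat.strong_induction_on with
  | _ k ih =>
    intro n p hk F hF P P2 hP hPW hP2 hP2W
    rcases n with _ | n
    · rw [hP.zero, hP2.zero]
    have hcap := hP.cap
    by_cases hp : p ∈ W ∨ p + 2 * (n + 1) = r + 2
    · have key : ∀ Q, Sp (n + 1) p r Q → (∀ x ∈ W, p ≤ x → x ≤ r + 1 → Cov Q x) →
          ∃ Q', Q = insert p Q' ∧ Sp n (p + 2) r Q' ∧
            ∀ x ∈ W, p + 2 ≤ x → x ≤ r + 1 → Cov Q' x := by
        intro Q hQ hQW
        obtain ⟨t, Q', rfl, h1, h2, h3, h4⟩ := hQ.peel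
        have htp : t = p := by
          rcases hp with hp | hp
          · rcases hQW p hp le_rfl (by omega) with h | ⟨y, hy, h⟩
            · rcases Finset.mem_insert.1 h with h | h
              · exact h.symm
              · have := h4.2.1 _ h; omega
            · have := hQ.2.1 y hy; omega
          · rcases h1.eq_or_lt with h | h
            · exact h.symm
            · have := (h4.cons (p := p + 1) h h2).cap
              omega
        subst htp
        refine ⟨Q', rfl, h4, fun x hx h5 h6 => ?_⟩
        rcases cov_insert.1 (hQW x hx (by omega) h6) with h | h | h
        · omega
        · omega
        · exact h
      have key2 : ∀ Q, (∀ x ∈ W, p + 2 ≤ x → x ≤ r + 1 → Cov Q x) →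
          ∀ x ∈ W, p ≤ x → x ≤ r + 1 → Cov (insert p Q) x := by
        intro Q hQ x hx h1 h2
        rw [cov_insert]
        rcases (by omega : x = p ∨ x = p + 1 ∨ p + 2 ≤ x) with h | h | h
        · exact Or.inl h
        · exact Or.inr (Or.inl h)
        · exact Or.inr (Or.inr (hQ x hx h h2))
      have key3 : ∀ u Q : Finset ℕ, (∀ x ∈ u, Cov Q x) → ∀ x ∈ insert (p + 1) u, Cov (insert p Q) x := by
        intro u Q h x hx
        rw [cov_insert]
        rcases Finset.mem_insert.1 hx with h' | h'
        · exact Or.inr (Or.inl h')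
        · exact Or.inr (Or.inr (h x h'))
      obtain ⟨Q, rfl, hQ, hQW⟩ := key P hP hPW
      obtain ⟨Q2, rfl, hQ2, hQ2W⟩ := key P2 hP2 hP2W
      refine ih (k - 2) (by omega) n (p + 2) (by omega) (fun Q => F (insert p Q)) ?_ Q Q2 hQ hQW
        hQ2 hQ2W
      intro P P2 u h1 h2 h3 h4 h5 h6 h7
      rcases n with _ | n
      · rw [h1.zero, h3.zero]
      · have := h5.cap
        exact hF _ _ (insert (p + 1) u) (h1.cons le_rfl (by omega)) (key2 _ h2)
          (h3.cons le_rfl (by omega)) (key2 _ h4) (h5.cons le_rfl (by omega)) (key3 _ _ h6)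
          (key3 _ _ h7)
    · rw [not_or] at hp
      have lift : ∀ Q, Sp (n + 1) (p + 1) r Q → Sp (n + 1) p r Q := fun Q hQ =>
        hQ.mono (fun x hx => by have := hQ.2.1 x hx; omega) (fun x hx => (hQ.2.1 x hx).2)
      have liftW : ∀ Q, (∀ x ∈ W, p + 1 ≤ x → x ≤ r + 1 → Cov Q x) →
          (∀ x ∈ W, p ≤ x → x ≤ r + 1 → Cov Q x) := by
        intro Q hQ x hx h1 h2
        refine hQ x hx ?_ h2
        rcases h1.eq_or_lt with rfl | h
        · exact absurd hx hp.1
        · exact h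
      have key : ∀ Q, Sp (n + 1) p r Q → (∀ x ∈ W, p ≤ x → x ≤ r + 1 → Cov Q x) →
          ∃ Q', Sp (n + 1) (p + 1) r Q' ∧ (∀ x ∈ W, p + 1 ≤ x → x ≤ r + 1 → Cov Q' x) ∧
          F Q = F Q' := by
        intro Q hQ hQW
        obtain ⟨Q', h1, h2, h3⟩ := shift r (n + 1) p (by omega) Q hQ
        have h4 : ∀ x ∈ W, p + 1 ≤ x → x ≤ r + 1 → Cov Q' x := by
          intro x hx h5 h6
          rcases h3 x (hQW x hx (by omega) h6) with h | h
          · omega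
          · exact h
        exact ⟨Q', h1, h4, hF Q Q' Q' hQ hQW (lift _ h1) (liftW _ h4) h1 h2
          (fun x hx => Or.inl hx)⟩
      obtain ⟨Q, hQ, hQW, e1⟩ := key P hP hPW
      obtain ⟨Q2, hQ2, hQ2W, e2⟩ := key P2 hP2 hP2W
      rw [e1, e2]
      refine ih (k - 1) (by omega) (n + 1) (p + 1) (by omega) F ?_ Q Q2 hQ hQW hQ2 hQ2W
      intro P P2 u h1 h2 h3 h4 h5 h6 h7
      exact hF _ _ u (lift _ h1) (liftW _ h2) (lift _ h3) (liftW _ h4)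
        (h5.mono (fun x hx => by have := h5.2.1 x hx; omega) (fun x hx => (h5.2.1 x hx).2)) h6 h7

theorem avoid (W : Set ℕ) (r n p t : ℕ) (hp : 1 ≤ p) (htW : t ∉ W) (h1 : p + 1 ≤ t) (h2 : t ≤ r)
    (hA : Has W n (p + 1) r) (hI : ¬ Has W (n + 1) p (r + 1)) :
    ∃ P, Sp n p r P ∧ (∀ x ∈ W, p ≤ x → x ≤ r + 1 → Cov P x) ∧
      ∃ T, Sp (n + 1) p (r + 1) T ∧ ∀ x ∈ T, x = t ∨ Cov P x := by
  obtain ⟨u, hu, huW⟩ := hA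
  have htu : t ∉ u := fun h => htW (huW t h)
  obtain ⟨s, rfl⟩ : ∃ s, t = s + 2 := ⟨t - 2, by omega⟩
  have hc : (u.filter (· < s + 2)).card + (u.filter (¬ · < s + 2)).card = n := by
    rw [Finset.card_filter_add_card_filter_not, hu.1]
  set u1 := u.filter (· < s + 2) with hu1
  set u2 := u.filter (¬ · < s + 2) with hu2
  have m1 : ∀ x, x ∈ u1 ↔ x ∈ u ∧ x < s + 2 := by simp [hu1]
  have m2 : ∀ x, x ∈ u2 ↔ x ∈ u ∧ ¬ x < s + 2 := by simp [hu2]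
  have s1 : Sp u1.card (p + 1) (s + 1) u1 := by
    refine ⟨rfl, fun x hx => ?_, fun x hx y hy => hu.2.2 x ((m1 x).1 hx).1 y ((m1 y).1 hy).1⟩
    have := (m1 x).1 hx
    have := hu.2.1 x this.1
    omega
  have s2 : Sp u2.card (s + 3) r u2 := by
    refine ⟨rfl, fun x hx => ?_, fun x hx y hy => hu.2.2 x ((m2 x).1 hx).1 y ((m2 y).1 hy).1⟩
    have := (m2 x).1 hx
    have h3 := hu.2.1 x this.1
    have : x ≠ s + 2 := fun h => htu (h ▸ this.1)
    omega
  have c1 : p + 2 * u1.card ≤ s + 2 := by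
    rcases h : u1.card with _ | j
    · omega
    · rw [h] at s1; have := s1.cap; omega
  have c2 : s + 3 + 2 * u2.card ≤ r + 2 := by
    rcases h : u2.card with _ | j
    · omega
    · rw [h] at s2; have := s2.cap; omega
  obtain ⟨P1, hP1, hW1⟩ := cover W s (s + 2) u1.card p (by omega) c1 (by
    rintro ⟨v, hv, hvW⟩
    have := hv.union s2 (by omega) (by omega) (by omega)
    refine hI ⟨v ∪ u2, ?_, ?_⟩
    · rw [show n + 1 = u1.card + 1 + u2.card by omega]
      exact this.mono (fun x hx => (this.2.1 x hx).1) (fun x hx => by have := this.2.1 x hx; omega)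
    · intro x hx
      rcases Finset.mem_union.1 hx with hx | hx
      · exact hvW x hx
      · exact huW x ((m2 x).1 hx).1)
  obtain ⟨P2, hP2, hW2⟩ := cover W r (r + 2) u2.card (s + 3) (by omega) c2 (by
    rintro ⟨v, hv, hvW⟩
    have := s1.union hv (by omega) (by omega) (by omega)
    refine hI ⟨u1 ∪ v, ?_, ?_⟩
    · rw [show n + 1 = u1.card + (u2.card + 1) by omega]
      exact this.mono (fun x hx => by have := this.2.1 x hx; omega) (fun x hx => (this.2.1 x hx).2)
    · intro x hx
      rcases Finset.mem_union.1 hx with hx | hx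
      · exact huW x ((m1 x).1 hx).1
      · exact hvW x hx)
  have hP := hP1.union hP2 (by omega) (by omega) (by omega)
  rw [hc] at hP
  refine ⟨P1 ∪ P2, hP, ?_, insert (s + 2) (P2.image (· + 1)) ∪ P1, ?_, ?_⟩
  · intro x hx h3 h4
    have h7 : x ≠ s + 2 := fun h => htW (h ▸ hx)
    rw [cov_union]
    rcases (by omega : x ≤ s + 1 ∨ s + 3 ≤ x) with h | h
    · exact Or.inl (hW1 x hx h3 h)
    · exact Or.inr (hW2 x hx h h4)
  · have hi : Sp u2.card (s + 2 + 2) (r + 1) (P2.image (· + 1)) := by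
      refine ⟨?_, ?_, ?_⟩
      · rw [Finset.card_image_of_injective _ (fun a b h => by simpa using h), hP2.1]
      · intro x hx
        obtain ⟨y, hy, rfl⟩ := Finset.mem_image.1 hx
        have := hP2.2.1 y hy
        omega
      · intro x hx y hy hxy
        obtain ⟨x', hx', rfl⟩ := Finset.mem_image.1 hx
        obtain ⟨y', hy', rfl⟩ := Finset.mem_image.1 hy
        have := hP2.2.2 x' hx' y' hy' (by omega)
        omega
    have := hP1.union (hi.cons (p := s + 2) le_rfl (by omega)) le_rfl (by omega) (by omega)
    rw [Finset.union_comm, show n + 1 = u1.card + (u2.card + 1) by omega]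
    exact this
  · intro x hx
    rw [cov_union]
    simp only [Finset.mem_union, Finset.mem_insert, Finset.mem_image] at hx
    rcases hx with (h | ⟨y, hy, rfl⟩) | h
    · exact Or.inl h
    · exact Or.inr (Or.inr (Or.inr ⟨y, hy, rfl⟩))
    · exact Or.inr (Or.inl (Or.inl h))

open MvPolynomial in
theorem mem_span_mon {k : Type*} [Field k] {N : ℕ} (S : Set (Fin N →₀ ℕ)) (f : MvPolynomial (Fin N) k) :
    f ∈ Ideal.span ((fun s => monomial s (1 : k)) '' S) ↔ ∀ e, coeff e f ≠ 0 → ∃ s ∈ S, s ≤ e := by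
  rw [mem_ideal_span_monomial_image]
  simp only [mem_support_iff]

def Wt {N : ℕ} (e : Fin N →₀ ℕ) : Set ℕ := {t | ∃ i : Fin N, e i ≠ 0 ∧ (i : ℕ) + 1 = t}

noncomputable def chi (N : ℕ) (u : Finset ℕ) : Fin N →₀ ℕ :=
  Finsupp.equivFunOnFinite.symm (fun i => if (i : ℕ) + 1 ∈ u then 1 else 0)

theorem chi_apply (N : ℕ) (u : Finset ℕ) (i : Fin N) :
    chi N u i = if (i : ℕ) + 1 ∈ u then 1 else 0 := rfl

theorem Wt_add {N : ℕ} (e e' : Fin N →₀ ℕ) (x : ℕ) : x ∈ Wt (e + e') ↔ x ∈ Wt e ∨ x ∈ Wt e' := by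
  constructor
  · rintro ⟨i, hi, rfl⟩
    by_cases h : e i = 0
    · exact Or.inr ⟨i, by simpa [h] using hi, rfl⟩
    · exact Or.inl ⟨i, h, rfl⟩
  · rintro (⟨i, hi, rfl⟩ | ⟨i, hi, rfl⟩)
    · exact ⟨i, by simp [hi], rfl⟩
    · exact ⟨i, by simp [hi], rfl⟩

theorem Wt_chi {N : ℕ} (u : Finset ℕ) (hu : ∀ x ∈ u, 1 ≤ x ∧ x ≤ N) (x : ℕ) :
    x ∈ Wt (chi N u) ↔ x ∈ u := by
  constructor
  · rintro ⟨i, hi, rfl⟩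
    by_contra h
    exact hi (by simp [chi_apply, h])
  · intro h
    have := hu x h
    refine ⟨⟨x - 1, by omega⟩, ?_, by simp; omega⟩
    simp [chi_apply, show x - 1 + 1 = x by omega, h]

theorem Wt_bd {N : ℕ} (e : Fin N →₀ ℕ) (x : ℕ) (hx : x ∈ Wt e) : 1 ≤ x ∧ x ≤ N := by
  obtain ⟨i, _, rfl⟩ := hx
  have := i.2
  omega

theorem chi_le {N : ℕ} (u : Finset ℕ) (hu : ∀ x ∈ u, 1 ≤ x ∧ x ≤ N) (e : Fin N →₀ ℕ) :
    chi N u ≤ e ↔ ∀ x ∈ u, x ∈ Wt e := by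
  constructor
  · intro h x hx
    have h1 := hu x hx
    refine ⟨⟨x - 1, by omega⟩, ?_, by simp; omega⟩
    have := h ⟨x - 1, by omega⟩
    simp only [chi_apply, show x - 1 + 1 = x by omega, hx, if_true] at this
    omega
  · intro h i
    rw [chi_apply]
    split_ifs with h1
    · obtain ⟨j, hj, hji⟩ := h _ h1
      have : j = i := Fin.ext (by omega)
      subst this
      omega
    · exact Nat.zero_le _

open MvPolynomial in
noncomputable def XS (k : Type*) [Field k] (N : ℕ) (u : Finset ℕ) : MvPolynomial (Fin N) k :=
  monomial (chi N u) 1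

open MvPolynomial in
theorem prod_Xv (k : Type*) [Field k] (N : ℕ) (u : Finset ℕ) (hu : ∀ x ∈ u, 1 ≤ x ∧ x ≤ N) :
    ∏ x ∈ u, Xv k N x = XS k N u := by
  induction u using Finset.induction_on with
  | empty =>
    have : chi N ∅ = 0 := by ext i; simp [chi_apply]
    simp [XS, this]
  | insert x u hx ih =>
    have h1 := hu x (Finset.mem_insert_self _ _)
    rw [Finset.prod_insert hx, ih (fun y hy => hu y (Finset.mem_insert_of_mem hy))]
    have : chi N (insert x u) = Finsupp.single ⟨x - 1, by omega⟩ 1 + chi N u := by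
      ext i
      simp only [chi_apply, Finsupp.add_apply, Finset.mem_insert, Finsupp.single_apply, Fin.ext_iff]
      by_cases h : (i : ℕ) + 1 = x
      · have h2 : (i : ℕ) + 1 ∉ u := by rw [h]; exact hx
        rw [if_pos (Or.inl h), if_pos (by omega), if_neg h2]
      · rw [if_neg (show ¬ (x - 1 = (i : ℕ)) by omega), zero_add]
        simp [h]
    unfold Xv XS
    rw [dif_pos h1, this, X, monomial_mul, one_mul]

theorem seq_spread {n : ℕ} {t : ℕ → ℕ} (h : ∀ j, j + 1 < n → t j + 2 ≤ t (j + 1)) :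
    ∀ j i, i < j → j < n → t i + 2 ≤ t j := by
  intro j
  induction j with
  | zero => intro i hi; omega
  | succ j ih =>
    intro i hi hj
    have := h j hj
    rcases (by omega : i = j ∨ i < j) with rfl | h1
    · exact this
    · have := ih i h1 (by omega); omega

theorem seq_inj {n : ℕ} {t : ℕ → ℕ} (h : ∀ j, j + 1 < n → t j + 2 ≤ t (j + 1)) :
    Set.InjOn t (Finset.range n) := by
  intro i hi j hj hij
  have hi' : i < n := by simpa using hi
  have hj' : j < n := by simpa using hj
  by_contra hne
  rcases Nat.lt_or_gt_of_ne hne with h1 | h1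
  · have := seq_spread h j i h1 hj'; omega
  · have := seq_spread h i j h1 hi'; omega

theorem seq_sp {n p q : ℕ} {t : ℕ → ℕ} (h0 : p ≤ t 0) (h1 : t (n - 1) ≤ q)
    (h : ∀ j, j + 1 < n → t j + 2 ≤ t (j + 1)) : Sp n p q ((Finset.range n).image t) := by
  refine ⟨?_, ?_, ?_⟩
  · rw [Finset.card_image_of_injOn (seq_inj h), Finset.card_range]
  · intro x hx
    obtain ⟨j, hj, rfl⟩ := Finset.mem_image.1 hx
    have hj' : j < n := by simpa using hj
    constructor
    · rcases Nat.eq_zero_or_pos j with rfl | hj0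
      · exact h0
      · have := seq_spread h j 0 hj0 hj'; omega
    · rcases (by omega : j = n - 1 ∨ j < n - 1) with rfl | h2
      · exact h1
      · have := seq_spread h (n - 1) j h2 (by omega); omega
  · intro x hx y hy hxy
    obtain ⟨i, hi, rfl⟩ := Finset.mem_image.1 hx
    obtain ⟨j, hj, rfl⟩ := Finset.mem_image.1 hy
    have hi' : i < n := by simpa using hi
    have hj' : j < n := by simpa using hj
    rcases Nat.lt_trichotomy i j with h2 | rfl | h2
    · exact seq_spread h j i h2 hj'
    · omega
    · have := seq_spread h i j h2 hi'; omega

theorem sp_seq {n p q : ℕ} {u : Finset ℕ} (hu : Sp (n + 1) p q u) :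
    ∃ t : ℕ → ℕ, p ≤ t 0 ∧ t n ≤ q ∧ (∀ j, j + 1 < n + 1 → t j + 2 ≤ t (j + 1)) ∧
      (Finset.range (n + 1)).image t = u := by
  induction n generalizing p u with
  | zero =>
    obtain ⟨x, u', rfl, h1, h2, -, h3⟩ := hu.peel
    refine ⟨fun _ => x, h1, h2, fun j hj => by omega, ?_⟩
    rw [h3.zero]; simp
  | succ n ih =>
    obtain ⟨x, u', rfl, h1, h2, -, h3⟩ := hu.peel
    obtain ⟨t, h4, h5, h6, rfl⟩ := ih h3
    refine ⟨fun j => Nat.casesOn j x t, h1, h5, ?_, ?_⟩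
    · intro j hj
      rcases j with _ | j
      · exact h4
      · exact h6 j (by omega)
    · rw [Finset.range_add_one', Finset.image_insert, Finset.map_eq_image, Finset.image_image]
      rfl

open MvPolynomial in
theorem idealI_eq (k : Type*) [Field k] (N n p q : ℕ) (hn : 1 ≤ n) (hp : 1 ≤ p) (hq : q ≤ N) :
    idealI k N n p q =
      Ideal.span ((fun s => monomial s (1 : k)) '' {s | ∃ u, Sp n p q u ∧ s = chi N u}) := by
  unfold idealI
  congr 1
  obtain ⟨n, rfl⟩ : ∃ j, n = j + 1 := ⟨n - 1, by omega⟩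
  have key : ∀ t : ℕ → ℕ, p ≤ t 0 → t n ≤ q → (∀ j, j + 1 < n + 1 → t j + 2 ≤ t (j + 1)) →
      ∏ j ∈ Finset.range (n + 1), Xv k N (t j) =
        XS k N ((Finset.range (n + 1)).image t) := by
    intro t h0 h1 h
    have := seq_sp h0 (n := n + 1) h1 h
    rw [← prod_Xv, Finset.prod_image (seq_inj h)]
    intro x hx
    have := this.2.1 x hx
    omega
  ext f
  constructor
  · rintro ⟨t, h0, h1, h, rfl⟩
    exact ⟨_, ⟨_, seq_sp h0 (n := n + 1) h1 h, rfl⟩, (key t h0 h1 h).symm⟩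
  · rintro ⟨_, ⟨u, hu, rfl⟩, rfl⟩
    obtain ⟨t, h0, h1, h, rfl⟩ := sp_seq hu
    exact ⟨t, h0, h1, h, (key t h0 h1 h).symm⟩

open MvPolynomial in
theorem mem_idealI (k : Type*) [Field k] (N n p q : ℕ) (hn : 1 ≤ n) (hp : 1 ≤ p) (hq : q ≤ N)
    (f : MvPolynomial (Fin N) k) :
    f ∈ idealI k N n p q ↔ ∀ e, coeff e f ≠ 0 → Has (Wt e) n p q := by
  rw [idealI_eq k N n p q hn hp hq, mem_span_mon]
  have key : ∀ u, Sp n p q u → ∀ x ∈ u, 1 ≤ x ∧ x ≤ N := by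
    intro u hu x hx
    have := hu.2.1 x hx; omega
  refine forall₂_congr fun e _ => ?_
  constructor
  · rintro ⟨_, ⟨u, hu, rfl⟩, h⟩
    exact ⟨u, hu, (chi_le u (key u hu) e).1 h⟩
  · rintro ⟨u, hu, h⟩
    exact ⟨_, ⟨u, hu, rfl⟩, (chi_le u (key u hu) e).2 h⟩

theorem Has.mono {W W' : Set ℕ} {n p q p' q' : ℕ} (h : Has W n p q) (hW : ∀ x ∈ W, x ∈ W')
    (hp : p' ≤ p) (hq : q ≤ q') : Has W' n p' q' := by
  obtain ⟨u, hu, huW⟩ := h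
  exact ⟨u, hu.mono (fun x hx => hp.trans (hu.2.1 x hx).1) (fun x hx => (hu.2.1 x hx).2.trans hq),
    fun x hx => hW x (huW x hx)⟩

theorem not_has_of_cov {W : Set ℕ} {n p r p' q' : ℕ} {P : Finset ℕ} (hP : Sp n p' q' P)
    (h : ∀ x ∈ W, p ≤ x → x ≤ r + 1 → Cov P x) : ¬ Has W (n + 1) p (r + 1) := by
  rintro ⟨T, hT, hTW⟩
  have := pigeon hT hP (fun x hx => h x (hTW x hx) (hT.2.1 x hx).1 (hT.2.1 x hx).2)
  omega

open MvPolynomial in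
theorem XS_mem (k : Type*) [Field k] {N n p q : ℕ} (hn : 1 ≤ n) (hp : 1 ≤ p) (hq : q ≤ N)
    {u : Finset ℕ} (hu : Sp n p q u) : XS k N u ∈ idealI k N n p q := by
  rw [idealI_eq k N n p q hn hp hq]
  exact Ideal.subset_span ⟨_, ⟨u, hu, rfl⟩, rfl⟩

theorem ann_comb {W : Set ℕ} {n p r : ℕ} (hc : p + 2 * n ≤ r + 1)
    (hW : ¬ Has W (n + 1) p (r + 1)) :
    ∃ u, Sp n (p + 1) r u ∧ ∃ P, Sp n p r P ∧ (∀ x ∈ W, p ≤ x → x ≤ r + 1 → Cov P x) ∧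
      ∀ x ∈ u, Cov P x := by
  obtain ⟨P, hP, hPW⟩ := cover W r (r + 2) n p (by omega) (by omega) hW
  obtain ⟨u, hu, h1, -⟩ := shift r n p hc P hP
  exact ⟨u, hu, P, hP, hPW, h1⟩

open MvPolynomial in
theorem coeff_XS_mul {k : Type*} [Field k] {N : ℕ} (u : Finset ℕ) (e : Fin N →₀ ℕ)
    (f : MvPolynomial (Fin N) k) : coeff (chi N u + e) (XS k N u * f) = coeff e f := by
  rw [XS, coeff_monomial_mul, one_mul]

open MvPolynomial in
theorem ann_ideal (k : Type*) [Field k] {N n p r : ℕ} (hp : 1 ≤ p) (hr : r + 1 ≤ N)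
    (hc : p + 2 * n ≤ r + 1) (f : MvPolynomial (Fin N) k)
    (hf : ∀ u, Sp n (p + 1) r u → XS k N u * f ∈ idealI k N (n + 1) p (r + 1)) :
    f ∈ idealI k N (n + 1) p (r + 1) := by
  rw [mem_idealI k N _ _ _ (by omega) hp hr]
  intro e he
  by_contra hW
  obtain ⟨u, hu, P, hP, hPW, huP⟩ := ann_comb hc hW
  have h1 := (mem_idealI k N _ _ _ (by omega) hp hr _).1 (hf u hu) (chi N u + e)
    (by rwa [coeff_XS_mul])
  refine not_has_of_cov hP ?_ h1
  intro x hx h2 h3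
  rcases (Wt_add _ _ _).1 hx with h | h
  · exact huP x ((Wt_chi u (fun x hx => by have := hu.2.1 x hx; omega) x).1 h)
  · exact hPW x h h2 h3

open MvPolynomial in
theorem homP (k : Type*) [Field k] {N n p r : ℕ} (hn : 1 ≤ n) (hp : 1 ≤ p) (hr : r + 1 ≤ N)
    (hc : p + 2 * n ≤ r + 1) (g : MvPolynomial (Fin N) k → MvPolynomial (Fin N) k)
    (h1 : ∀ a ∈ idealI k N n (p + 1) r, g a ∈ idealI k N n (p + 1) r)
    (h2 : ∀ a ∈ idealI k N n (p + 1) r, ∀ b ∈ idealI k N n (p + 1) r,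
      g (a + b) - g a - g b ∈ idealI k N (n + 1) p (r + 1))
    (h3 : ∀ c, ∀ a ∈ idealI k N n (p + 1) r, g (c * a) - c * g a ∈ idealI k N (n + 1) p (r + 1))
    (h4 : ∀ a ∈ idealI k N n (p + 1) r, a ∈ idealI k N (n + 1) p (r + 1) →
      g a ∈ idealI k N (n + 1) p (r + 1)) :
    ∃ s, ∀ a ∈ idealI k N n (p + 1) r, g a - s * a ∈ idealI k N (n + 1) p (r + 1) := by
  classical
  have mI := mem_idealI k N (n + 1) p (r + 1) (by omega) hp hr
  have mA := mem_idealI k N n (p + 1) r hn (by omega) (by omega)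
  have bd : ∀ u, Sp n (p + 1) r u → ∀ x ∈ u, 1 ≤ x ∧ x ≤ N := fun u hu x hx => by
    have := hu.2.1 x hx; omega
  have XA : ∀ u, Sp n (p + 1) r u → XS k N u ∈ idealI k N n (p + 1) r := fun u hu =>
    XS_mem k hn (by omega) (by omega) hu
  have claim1 : ∀ u, Sp n (p + 1) r u → ∀ e, coeff e (g (XS k N u)) ≠ 0 →
      ¬ Has (Wt e) (n + 1) p (r + 1) → ∀ x ∈ u, x ∈ Wt e := by
    intro u hu e he hI t ht
    by_contra htW
    obtain ⟨P, hP, hPW, T, hT, hTP⟩ := avoid (Wt e) r n p t hp htW (hu.2.1 t ht).1 (hu.2.1 t ht).2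
      ((mA _).1 (h1 _ (XA u hu)) e he) hI
    have bT : ∀ x ∈ T.erase t, 1 ≤ x ∧ x ≤ N := fun x hx => by
      have := hT.2.1 x (Finset.mem_of_mem_erase hx); omega
    have e1 : XS k N (T.erase t) * XS k N u ∈ idealI k N (n + 1) p (r + 1) := by
      rw [mI]
      intro e' he'
      rw [XS, XS, monomial_mul, coeff_monomial] at he'
      have : chi N (T.erase t) + chi N u = e' := by
        by_contra hne
        exact he' (if_neg hne)
      refine ⟨T, hT, fun x hx => ?_⟩
      rw [← this, Wt_add, Wt_chi _ bT, Wt_chi _ (bd u hu)]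
      by_cases hxt : x = t
      · exact Or.inr (hxt ▸ ht)
      · exact Or.inl (Finset.mem_erase.2 ⟨hxt, hx⟩)
    have e2 := h4 _ (Ideal.mul_mem_left _ _ (XA u hu)) e1
    have e3 := h3 (XS k N (T.erase t)) _ (XA u hu)
    have e4 : XS k N (T.erase t) * g (XS k N u) ∈ idealI k N (n + 1) p (r + 1) := by
      have := Ideal.sub_mem _ e2 e3
      simpa using this
    have e5 := (mI _).1 e4 (chi N (T.erase t) + e) (by rwa [coeff_XS_mul])
    refine not_has_of_cov hP ?_ e5
    intro x hx hx1 hx2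
    rcases (Wt_add _ _ _).1 hx with h | h
    · have := (Wt_chi _ bT x).1 h
      rcases hTP x (Finset.mem_of_mem_erase this) with h' | h'
      · exact absurd h' (Finset.ne_of_mem_erase this)
      · exact h'
    · exact hPW x h hx1 hx2
  have claim2 : ∀ w u u', Sp n (p + 1) r u → Sp n (p + 1) r u' →
      ¬ Has (Wt (chi N u' + (chi N u + w))) (n + 1) p (r + 1) →
      coeff (chi N u + w) (g (XS k N u)) = coeff (chi N u' + w) (g (XS k N u')) := by
    intro w u u' hu hu' hI
    have e1 := h3 (XS k N u') _ (XA u hu)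
    have e2 := h3 (XS k N u) _ (XA u' hu')
    rw [mul_comm (XS k N u) (XS k N u')] at e2
    have e3 := Ideal.sub_mem _ e2 e1
    by_contra hne
    refine hI ((mI _).1 e3 _ ?_)
    rw [sub_sub_sub_cancel_left, coeff_sub, coeff_XS_mul,
      show chi N u' + (chi N u + w) = chi N u + (chi N u' + w) by abel, coeff_XS_mul]
    exact sub_ne_zero.2 hne
  have claim3 : ∀ w u u', Sp n (p + 1) r u → Sp n (p + 1) r u' →
      ¬ Has (Wt (chi N u + w)) (n + 1) p (r + 1) → ¬ Has (Wt (chi N u' + w)) (n + 1) p (r + 1) →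
      coeff (chi N u + w) (g (XS k N u)) = coeff (chi N u' + w) (g (XS k N u')) := by
    intro w u u' hu hu' hI hI'
    have ex : ∀ P, ∃ v, Sp n p r P → Sp n (p + 1) r v ∧ ∀ x ∈ v, Cov P x := by
      intro P
      by_cases hP : Sp n p r P
      · obtain ⟨v, hv, hvP, -⟩ := shift r n p hc P hP
        exact ⟨v, fun _ => ⟨hv, hvP⟩⟩
      · exact ⟨∅, fun h => absurd h hP⟩
    choose v hv using ex
    have main : ∀ P u, Sp n p r P → (∀ x ∈ Wt w, p ≤ x → x ≤ r + 1 → Cov P x) →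
        Sp n (p + 1) r u → (∀ x ∈ u, Cov P x) →
        coeff (chi N (v P) + w) (g (XS k N (v P))) = coeff (chi N u + w) (g (XS k N u)) := by
      intro P u hP hPW hu huP
      refine claim2 w _ _ (hv P hP).1 hu ?_
      refine not_has_of_cov hP ?_
      intro x hx hx1 hx2
      rw [Wt_add, Wt_add, Wt_chi _ (bd u hu), Wt_chi _ (bd _ (hv P hP).1)] at hx
      rcases hx with h | h | h
      · exact huP x h
      · exact (hv P hP).2 x h
      · exact hPW x h hx1 hx2
    have cv : ∀ u, Sp n (p + 1) r u → ¬ Has (Wt (chi N u + w)) (n + 1) p (r + 1) →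
        ∃ P, Sp n p r P ∧ (∀ x ∈ Wt w, p ≤ x → x ≤ r + 1 → Cov P x) ∧ ∀ x ∈ u, Cov P x := by
      intro u hu hI
      obtain ⟨P, hP, hPW⟩ := cover _ r (r + 2) n p (by omega) (by omega) hI
      refine ⟨P, hP, fun x hx => hPW x ((Wt_add _ _ _).2 (Or.inr hx)), fun x hx => ?_⟩
      have := hu.2.1 x hx
      exact hPW x ((Wt_add _ _ _).2 (Or.inl ((Wt_chi _ (bd u hu) _).2 hx))) (by omega) (by omega)
    obtain ⟨P, hP, hPW, huP⟩ := cv u hu hI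
    obtain ⟨P', hP', hPW', huP'⟩ := cv u' hu' hI'
    rw [← main P u hP hPW hu huP, ← main P' u' hP' hPW' hu' huP']
    refine conn (Wt w) r (r + 2) n p (by omega)
      (fun P => coeff (chi N (v P) + w) (g (XS k N (v P)))) ?_ P P' hP hPW hP' hPW'
    intro P P2 u a1 a2 a3 a4 a5 a6 a7
    exact (main P u a1 a2 a5 a6).trans (main P2 u a3 a4 a5 a7).symm
  have exC : ∀ w, ∃ c : k, (∀ u, Sp n (p + 1) r u → ¬ Has (Wt (chi N u + w)) (n + 1) p (r + 1) →
      coeff (chi N u + w) (g (XS k N u)) = c) ∧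
      (c ≠ 0 → ∃ u, Sp n (p + 1) r u ∧ coeff (chi N u + w) (g (XS k N u)) ≠ 0) := by
    intro w
    by_cases h : ∃ u, Sp n (p + 1) r u ∧ ¬ Has (Wt (chi N u + w)) (n + 1) p (r + 1)
    · obtain ⟨u, hu, hI⟩ := h
      exact ⟨coeff (chi N u + w) (g (XS k N u)), fun u' hu' hI' => claim3 w u' u hu' hu hI' hI,
        fun h => ⟨u, hu, h⟩⟩
    · exact ⟨0, fun u hu hI => absurd ⟨u, hu, hI⟩ h, fun h => absurd rfl h⟩
  choose C hC1 hC2 using exC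
  have hfin : {w | C w ≠ 0}.Finite := by
    refine Set.Finite.subset (s := ⋃ u ∈ (Finset.range (r + 1)).powerset,
      (fun w => chi N u + w) ⁻¹' ((g (XS k N u)).support : Set (Fin N →₀ ℕ))) ?_ ?_
    · refine Set.Finite.biUnion (Finset.finite_toSet _) fun u _ => ?_
      exact (Finset.finite_toSet _).preimage (fun a _ b _ h => by simpa using h)
    · intro w hw
      obtain ⟨u, hu, h⟩ := hC2 w hw
      refine Set.mem_biUnion (x := u) ?_ ?_
      · simp only [Finset.coe_powerset, Set.mem_preimage, Set.mem_powerset_iff]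
        intro x hx
        have := hu.2.1 x hx
        simp only [Finset.coe_range, Set.mem_Iio]
        omega
      · simpa using h
  let s : MvPolynomial (Fin N) k := ∑ w ∈ hfin.toFinset, monomial w (C w)
  have hs : ∀ w, coeff w s = C w := by
    intro w
    simp only [s, coeff_sum, coeff_monomial, Finset.sum_ite_eq', Set.Finite.mem_toFinset]
    by_cases h : C w = 0
    · simp [h]
    · simp [h]
  have gen : ∀ u, Sp n (p + 1) r u → g (XS k N u) - s * XS k N u ∈ idealI k N (n + 1) p (r + 1) := by
    intro u hu
    rw [mI]
    intro e he
    by_contra hI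
    apply he
    by_cases hle : chi N u ≤ e
    · obtain ⟨w, rfl⟩ := exists_add_of_le hle
      rw [mul_comm, coeff_sub, coeff_XS_mul, hs, hC1 w u hu hI, sub_self]
    · have h0 : coeff e (g (XS k N u)) = 0 := by
        by_contra h
        exact hle ((chi_le u (bd u hu) e).2 (claim1 u hu e h hI))
      rw [coeff_sub, h0, XS, coeff_mul_monomial', if_neg hle, sub_self]
  refine ⟨s, fun a ha => ?_⟩
  have hA := idealI_eq k N n (p + 1) r hn (by omega) (by omega)
  have ha' := ha
  rw [hA] at ha'
  rw [Ideal.span] at ha'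
  induction ha' using Submodule.span_induction with
  | mem x hx =>
    obtain ⟨_, ⟨u, hu, rfl⟩, rfl⟩ := hx
    exact gen u hu
  | zero =>
    rw [mul_zero, sub_zero]
    exact h4 0 (Ideal.zero_mem _) (Ideal.zero_mem _)
  | add x y hx hy ihx ihy =>
    have hx' : x ∈ idealI k N n (p + 1) r := by rw [hA]; exact hx
    have hy' : y ∈ idealI k N n (p + 1) r := by rw [hA]; exact hy
    have := Ideal.add_mem _ (h2 x hx' y hy') (Ideal.add_mem _ (ihx hx') (ihy hy'))
    convert this using 1
    ring
  | smul c x hx ih =>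
    have hx' : x ∈ idealI k N n (p + 1) r := by rw [hA]; exact hx
    have := Ideal.add_mem _ (h3 c x hx') (Ideal.mul_mem_left _ c (ih hx'))
    rw [smul_eq_mul]
    convert this using 1
    ring

theorem abstract_seq {R : Type*} [CommRing R] (I A B I' J : Ideal R) (y z : R)
    (hJ : J = A + Ideal.span {z} * B)
    (H1 : I ≤ A) (H1' : I ≤ I')
    (H2 : ∀ r, (∀ x ∈ A, r * x ∈ I) → r ∈ I')
    (H2' : ∀ r ∈ I', ∃ v ∈ B, r - y * v ∈ I)
    (H3 : ∀ r, (∀ b ∈ B, y * r * b ∈ I) → r ∈ A)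
    (H4 : ∀ v ∈ A, v ∈ B → y * v ∈ I)
    (H7 : ∀ v, y * v ∈ A → v ∈ A)
    (H8 : ∀ v, z * v ∈ A → v ∈ A)
    (H9 : ∀ v, z * v ∈ I → v ∈ I)
    (HP1 : ∀ g : R → R, (∀ a ∈ A, g a ∈ A) → (∀ a ∈ A, ∀ b ∈ A, g (a + b) - g a - g b ∈ I') →
      (∀ c, ∀ a ∈ A, g (c * a) - c * g a ∈ I') → (∀ a ∈ A, a ∈ I' → g a ∈ I') →
      ∃ s, ∀ a ∈ A, g a - s * a ∈ I')
    (HP2 : ∀ g : R → R, (∀ a ∈ B, g a ∈ B) → (∀ a ∈ B, ∀ b ∈ B, g (a + b) - g a - g b ∈ A) →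
      (∀ c, ∀ a ∈ B, g (c * a) - c * g a ∈ A) → (∀ a ∈ B, a ∈ A → g a ∈ A) →
      ∃ s, ∀ a ∈ B, g a - s * a ∈ A)
    (Jbar : Ideal (R ⧸ I)) (hJbar : Jbar = J.map (Ideal.Quotient.mk I))
    (Θ : (R ⧸ I) →ₗ[R ⧸ I] (Jbar →ₗ[R ⧸ I] R ⧸ I))
    (hΘ : ∀ (r : R ⧸ I) (u : Jbar), Θ r u = r * (u : R ⧸ I)) :
    Function.Injective Θ ∧
    Nonempty (((Jbar →ₗ[R ⧸ I] R ⧸ I) ⧸ LinearMap.range Θ) ≃ₗ[R ⧸ I] ((R ⧸ I) ⧸ Jbar)) := by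
  classical
  have mkI : ∀ {x y : R}, Ideal.Quotient.mk I x = Ideal.Quotient.mk I y ↔ x - y ∈ I :=
    Ideal.Quotient.eq
  have AJ : ∀ x ∈ A, x ∈ J := fun x hx => by rw [hJ]; exact Ideal.mem_sup_left hx
  have BJ : ∀ x ∈ B, z * x ∈ J := fun x hx => by
    rw [hJ]
    exact Ideal.mem_sup_right (Ideal.mul_mem_mul (Ideal.mem_span_singleton_self z) hx)
  have memJ : ∀ x ∈ J, ∃ f ∈ A, ∃ g ∈ B, x = f + z * g := by
    intro x hx
    rw [hJ] at hx
    obtain ⟨f, hf, w, hw, rfl⟩ := Submodule.mem_sup.1 hx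
    obtain ⟨g, hg, rfl⟩ := Ideal.mem_span_singleton_mul.1 hw
    exact ⟨f, hf, g, hg, rfl⟩
  have jmem : ∀ x ∈ J, Ideal.Quotient.mk I x ∈ Jbar := fun x hx => by
    rw [hJbar]; exact Ideal.mem_map_of_mem _ hx
  have jbar : ∀ u : Jbar, ∃ x, ∃ h : x ∈ J, u = ⟨Ideal.Quotient.mk I x, jmem x h⟩ := by
    rintro ⟨u, hu⟩
    have hu' := hu
    rw [hJbar, Ideal.mem_map_iff_of_surjective _ Ideal.Quotient.mk_surjective] at hu'
    obtain ⟨x, hx, rfl⟩ := hu'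
    exact ⟨x, hx, rfl⟩
  have H4' : ∀ v ∈ A, ∀ b ∈ B, y * v * b ∈ I := fun v hv b hb => by
    rw [mul_assoc]
    exact H4 _ (Ideal.mul_mem_right _ _ hv) (Ideal.mul_mem_left _ _ hb)
  have H10 : ∀ v, y * v ∈ I → v ∈ A := fun v hv => H3 v fun b _ => Ideal.mul_mem_right _ _ hv
  have H11 : ∀ x ∈ A, x ∈ I' → x ∈ I := by
    intro x hxA hxI
    obtain ⟨v, hv, h⟩ := H2' x hxI
    have h1 : y * v ∈ A := by
      have := Ideal.sub_mem _ hxA (H1 h)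
      simpa using this
    have := Ideal.add_mem _ h (H4 v (H7 v h1) hv)
    simpa using this
  have inj : Function.Injective Θ := by
    rw [injective_iff_map_eq_zero]
    intro s hs
    obtain ⟨s, rfl⟩ := Ideal.Quotient.mk_surjective s
    have h1 : ∀ x ∈ J, s * x ∈ I := by
      intro x hx
      have := hΘ (Ideal.Quotient.mk I s) ⟨_, jmem x hx⟩
      rw [hs, LinearMap.zero_apply] at this
      simp only [← map_mul] at this
      exact Ideal.Quotient.eq_zero_iff_mem.1 this.symm
    obtain ⟨v, hv, h2⟩ := H2' s (H2 s fun x hx => h1 x (AJ x hx))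
    rw [Ideal.Quotient.eq_zero_iff_mem]
    have h3 : v ∈ A := by
      refine H3 v fun b hb => ?_
      have h4 : s * b ∈ I := H9 _ (by
        have := h1 _ (BJ b hb)
        rwa [show z * (s * b) = s * (z * b) by ring])
      have := Ideal.sub_mem _ h4 (Ideal.mul_mem_right b _ h2)
      convert this using 1
      ring
    have := Ideal.add_mem _ h2 (H4 v h3 hv)
    simpa using this
  refine ⟨inj, ?_⟩
  have uniq : ∀ f ∈ A, ∀ g ∈ B, ∀ f' ∈ A, ∀ g' ∈ B,
      Ideal.Quotient.mk I (f + z * g) = Ideal.Quotient.mk I (f' + z * g') →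
      Ideal.Quotient.mk I (y * g) = Ideal.Quotient.mk I (y * g') := by
    intro f hf g hg f' hf' g' hg' h
    rw [mkI] at h ⊢
    rw [← mul_sub]
    refine H4 _ (H8 _ ?_) (Ideal.sub_mem _ hg hg')
    have := Ideal.sub_mem _ (H1 h) (Ideal.sub_mem _ hf hf')
    convert this using 1
    ring
  have dec : ∀ u : Jbar, ∃ f g, f ∈ A ∧ g ∈ B ∧ (u : R ⧸ I) = Ideal.Quotient.mk I (f + z * g) := by
    intro u
    obtain ⟨x, hx, rfl⟩ := jbar u
    obtain ⟨f, hf, g, hg, rfl⟩ := memJ x hx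
    exact ⟨f, g, hf, hg, rfl⟩
  choose F G hF hG hFG using dec
  let φ : Jbar →ₗ[R ⧸ I] R ⧸ I :=
    { toFun := fun u => Ideal.Quotient.mk I (y * G u)
      map_add' := by
        intro u v
        rw [← map_add, ← mul_add]
        refine uniq (F (u + v)) (hF _) _ (hG _) (F u + F v) (Ideal.add_mem _ (hF _) (hF _)) _
          (Ideal.add_mem _ (hG _) (hG _)) ?_
        rw [← hFG, Submodule.coe_add, hFG u, hFG v, ← map_add]
        congr 1
        ring
      map_smul' := by
        intro c u
        obtain ⟨c, rfl⟩ := Ideal.Quotient.mk_surjective c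
        rw [RingHom.id_apply, smul_eq_mul, ← map_mul, show c * (y * G u) = y * (c * G u) by ring]
        refine uniq (F (Ideal.Quotient.mk I c • u)) (hF _) _ (hG _) (c * F u) (Ideal.mul_mem_left _ _ (hF _)) _
          (Ideal.mul_mem_left _ _ (hG _)) ?_
        rw [← hFG, Submodule.coe_smul, smul_eq_mul, hFG u, ← map_mul]
        congr 1
        ring }
  have hφ : ∀ f (hf : f ∈ A) g (hg : g ∈ B) (h : Ideal.Quotient.mk I (f + z * g) ∈ Jbar),
      φ ⟨_, h⟩ = Ideal.Quotient.mk I (y * g) := by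
    intro f hf g hg h
    exact uniq _ (hF _) _ (hG _) f hf g hg (hFG ⟨_, h⟩).symm
  have gen : ∀ ψ : Jbar →ₗ[R ⧸ I] R ⧸ I, ∃ p s : R, ψ = Θ (Ideal.Quotient.mk I p) +
      Ideal.Quotient.mk I s • φ := by
    intro ψ
    have ex : ∀ x, ∃ w, ∀ h : x ∈ J, Ideal.Quotient.mk I w = ψ ⟨_, jmem x h⟩ := by
      intro x
      by_cases h : x ∈ J
      · obtain ⟨w, hw⟩ := Ideal.Quotient.mk_surjective (ψ ⟨_, jmem x h⟩)
        exact ⟨w, fun _ => hw⟩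
      · exact ⟨0, fun h' => absurd h' h⟩
    choose q hq using ex
    have q_add : ∀ x ∈ J, ∀ x' ∈ J, q (x + x') - q x - q x' ∈ I := by
      intro x hx x' hx'
      rw [sub_sub, ← mkI, map_add, hq _ hx, hq _ hx', hq _ (Ideal.add_mem _ hx hx'), ← map_add]
      congr 1
    have q_mul : ∀ c, ∀ x ∈ J, q (c * x) - c * q x ∈ I := by
      intro c x hx
      rw [← mkI, map_mul, hq _ hx, hq _ (Ideal.mul_mem_left _ c hx)]
      exact ψ.map_smul (Ideal.Quotient.mk I c) ⟨_, jmem x hx⟩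
    have q_I : ∀ x ∈ J, x ∈ I → q x ∈ I := by
      intro x hx hxI
      rw [← Ideal.Quotient.eq_zero_iff_mem, hq _ hx, ← map_zero ψ]
      congr 1
      exact Subtype.ext (Ideal.Quotient.eq_zero_iff_mem.2 hxI)
    have q_A : ∀ x ∈ A, q x ∈ A := by
      intro x hx
      refine H3 _ fun b hb => ?_
      have h1 := H4' x hx b hb
      rw [show y * x * b = y * b * x by ring] at h1
      have h2 := q_I _ (Ideal.mul_mem_left _ _ (AJ x hx)) h1
      have := Ideal.sub_mem _ h2 (q_mul (y * b) x (AJ x hx))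
      convert this using 1
      ring
    obtain ⟨p, hp⟩ := HP1 q q_A (fun a ha b hb => H1' (q_add a (AJ a ha) b (AJ b hb)))
      (fun c a ha => H1' (q_mul c a (AJ a ha)))
      (fun a ha hI => H1' (q_I a (AJ a ha) (H11 a ha hI)))
    have hp' : ∀ a ∈ A, q a - p * a ∈ I := fun a ha =>
      H11 _ (Ideal.sub_mem _ (q_A a ha) (Ideal.mul_mem_left _ _ ha)) (hp a ha)
    have exv : ∀ b, ∃ v, b ∈ B → v ∈ B ∧ q (z * b) - p * (z * b) - y * v ∈ I := by
      intro b
      by_cases hb : b ∈ B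
      · obtain ⟨v, hv, h⟩ := H2' (q (z * b) - p * (z * b)) (H2 _ fun x hx => by
          have h1 := hp' (x * (z * b)) (Ideal.mul_mem_right _ _ hx)
          have h2 := q_mul x _ (BJ b hb)
          have := Ideal.sub_mem _ h1 h2
          convert this using 1
          ring)
        exact ⟨v, fun _ => ⟨hv, h⟩⟩
      · exact ⟨0, fun h => absurd h hb⟩
    choose β hβ using exv
    obtain ⟨s, hs⟩ := HP2 β (fun b hb => (hβ b hb).1)
      (fun b hb b' hb' => H10 _ (by
        have h1 := (hβ _ (Ideal.add_mem _ hb hb')).2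
        have h2 := (hβ b hb).2
        have h3 := (hβ b' hb').2
        have h4 := q_add _ (BJ b hb) _ (BJ b' hb')
        rw [← mul_add] at h4
        have := Ideal.sub_mem _ h4 (Ideal.sub_mem _ h1 (Ideal.add_mem _ h2 h3))
        convert this using 1
        ring))
      (fun c b hb => H10 _ (by
        have h1 := (hβ _ (Ideal.mul_mem_left _ c hb)).2
        have h2 := Ideal.mul_mem_left _ c (hβ b hb).2
        have h4 := q_mul c _ (BJ b hb)
        rw [show c * (z * b) = z * (c * b) by ring] at h4
        have := Ideal.sub_mem _ h4 (Ideal.sub_mem _ h1 h2)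
        convert this using 1
        ring))
      (fun b hb hbA => H10 _ (by
        have h1 := (hβ b hb).2
        have h2 := hp' (z * b) (Ideal.mul_mem_left _ _ hbA)
        have := Ideal.sub_mem _ h2 h1
        convert this using 1
        ring))
    refine ⟨p, s, ?_⟩
    ext u
    obtain ⟨x, hx, rfl⟩ := jbar u
    obtain ⟨f, hf, g, hg, rfl⟩ := memJ x hx
    rw [LinearMap.add_apply, LinearMap.smul_apply, hφ f hf g hg, hΘ, ← hq _ hx, smul_eq_mul,
      ← map_mul, ← map_mul, ← map_add, mkI]
    have h1 := q_add f (AJ f hf) _ (BJ g hg)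
    have h2 := hp' f hf
    have h3 := (hβ g hg).2
    have h4 := H4 _ (hs g hg) (Ideal.sub_mem _ (hβ g hg).1 (Ideal.mul_mem_left _ _ hg))
    have := Ideal.add_mem _ (Ideal.add_mem _ h1 h2) (Ideal.add_mem _ h3 h4)
    convert this using 1
    ring
  let Λ : (R ⧸ I) →ₗ[R ⧸ I] ((Jbar →ₗ[R ⧸ I] R ⧸ I) ⧸ LinearMap.range Θ) :=
    (LinearMap.range Θ).mkQ ∘ₗ LinearMap.toSpanSingleton (R ⧸ I) _ φ
  have hΛ : ∀ r, Λ r = (LinearMap.range Θ).mkQ (r • φ) := fun r => rfl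
  have surj : Function.Surjective Λ := by
    intro w
    obtain ⟨ψ, rfl⟩ := (LinearMap.range Θ).mkQ_surjective w
    obtain ⟨p, s, rfl⟩ := gen ψ
    refine ⟨Ideal.Quotient.mk I s, ?_⟩
    rw [hΛ, map_add]
    have : (LinearMap.range Θ).mkQ (Θ (Ideal.Quotient.mk I p)) = 0 := by
      rw [Submodule.mkQ_apply, Submodule.Quotient.mk_eq_zero]
      exact ⟨_, rfl⟩
    rw [this, zero_add]
  have ker : LinearMap.ker Λ = Jbar := by
    ext r
    rw [LinearMap.mem_ker, hΛ, Submodule.mkQ_apply, Submodule.Quotient.mk_eq_zero]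
    constructor
    · rintro ⟨s, hs⟩
      obtain ⟨r, rfl⟩ := Ideal.Quotient.mk_surjective r
      obtain ⟨s, rfl⟩ := Ideal.Quotient.mk_surjective s
      have key : ∀ f ∈ A, ∀ g ∈ B, s * (f + z * g) - r * (y * g) ∈ I := by
        intro f hf g hg
        have hx : f + z * g ∈ J := Ideal.add_mem _ (AJ f hf) (BJ g hg)
        have := LinearMap.congr_fun hs ⟨_, jmem _ hx⟩
        rwa [hΘ, LinearMap.smul_apply, hφ f hf g hg, smul_eq_mul, ← map_mul, ← map_mul, mkI] at this
      obtain ⟨v, hv, h⟩ := H2' s (H2 s fun x hx => by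
        have := key x hx 0 (Ideal.zero_mem _)
        simpa using this)
      have h1 : r - z * v ∈ A := H3 _ fun b hb => by
        have h2 := key 0 (Ideal.zero_mem _) b hb
        have := Ideal.sub_mem _ (Ideal.mul_mem_left _ (z * b) h) h2
        convert this using 1
        ring
      refine jmem r ?_
      have := Ideal.add_mem _ (AJ _ h1) (BJ v hv)
      simpa using this
    · intro hr
      obtain ⟨x, hx, e⟩ := jbar ⟨r, hr⟩
      have e' : r = Ideal.Quotient.mk I x := congrArg Subtype.val e
      obtain ⟨f, hf, v, hv, rfl⟩ := memJ x hx
      refine ⟨Ideal.Quotient.mk I (y * v), ?_⟩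
      ext u
      obtain ⟨x', hx', rfl⟩ := jbar u
      obtain ⟨f', hf', g, hg, rfl⟩ := memJ x' hx'
      rw [hΘ, LinearMap.smul_apply, hφ f' hf' g hg, e', smul_eq_mul, ← map_mul, ← map_mul, mkI]
      have h1 := H4' f' hf' v hv
      have h2 := H4' f hf g hg
      have := Ideal.sub_mem _ h1 h2
      convert this using 1
      ring
  exact ⟨((Submodule.quotEquivOfEq _ _ ker).symm.trans
    (LinearMap.quotKerEquivOfSurjective Λ surj)).symm⟩

theorem Has.cons {W : Set ℕ} {n p q t : ℕ} (h : Has W n (t + 2) q) (ht : t ∈ W) (h1 : p ≤ t)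
    (h2 : t ≤ q) : Has W (n + 1) p q := by
  obtain ⟨u, hu, huW⟩ := h
  refine ⟨insert t u, hu.cons h1 h2, fun x hx => ?_⟩
  rcases Finset.mem_insert.1 hx with rfl | hx
  · exact ht
  · exact huW x hx

theorem Has.snoc {W : Set ℕ} {n p q t : ℕ} (h : Has W n p q) (ht : t ∈ W) (h1 : q + 2 ≤ t)
    (h2 : p ≤ t) : Has W (n + 1) p t := by
  obtain ⟨u, hu, huW⟩ := h
  have h3 : Sp 1 t t {t} := by simpa using (sp_empty (t + 2) t).cons (le_refl t) le_rfl
  refine ⟨u ∪ {t}, hu.union h3 h1 h2 (by omega), fun x hx => ?_⟩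
  rcases Finset.mem_union.1 hx with hx | hx
  · exact huW x hx
  · rw [Finset.mem_singleton.1 hx]; exact ht

theorem Has.drop_first {W : Set ℕ} {n p q : ℕ} (h : Has W (n + 1) p q) : Has W n (p + 2) q := by
  obtain ⟨u, hu, huW⟩ := h
  obtain ⟨t, u', rfl, h1, -, -, h2⟩ := hu.peel
  exact ⟨u', h2.mono (fun x hx => by have := h2.2.1 x hx; omega) (fun x hx => (h2.2.1 x hx).2),
    fun x hx => huW x (Finset.mem_insert_of_mem hx)⟩

theorem Has.drop_last {W : Set ℕ} {n p q : ℕ} (h : Has W (n + 1) p (q + 2)) : Has W n p q := by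
  obtain ⟨u, ⟨hc, hb, hs⟩, huW⟩ := h
  have hne : u.Nonempty := by rw [← Finset.card_pos]; omega
  have hm := u.max'_mem hne
  refine ⟨u.erase (u.max' hne), ⟨?_, ?_, ?_⟩, fun x hx => huW x (Finset.mem_of_mem_erase hx)⟩
  · rw [Finset.card_erase_of_mem hm]; omega
  · intro x hx
    obtain ⟨hx1, hx2⟩ := Finset.mem_erase.1 hx
    have := u.le_max' x hx2
    have := hs _ hx2 _ hm (by omega)
    have := hb _ hm
    have := hb _ hx2
    omega
  · intro x hx y hy
    exact hs x (Finset.mem_of_mem_erase hx) y (Finset.mem_of_mem_erase hy)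

theorem has_pair {W : Set ℕ} {M : ℕ} : ∀ n p : ℕ, p + 2 * n ≤ M → Has W (n + 1) p (M + 1) →
    Has W n (p + 1) M → Has W (n + 1) (p + 1) (M + 1) ∨ Has W (n + 1) p M := by
  intro n
  induction n with
  | zero =>
    rintro p hp ⟨u, hu, huW⟩ -
    obtain ⟨t, u', rfl, h1, h2, h3, h4⟩ := hu.peel
    have ht := huW t h3
    rcases (by omega : t ≤ M ∨ p + 1 ≤ t) with h | h
    · exact Or.inr (Has.cons ⟨∅, sp_empty _ _, by simp⟩ ht h1 h)
    · exact Or.inl (Has.cons ⟨∅, sp_empty _ _, by simp⟩ ht h h2)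
  | succ n ih =>
    rintro p hp ⟨u, hu, huW⟩ ⟨v, hv, hvW⟩
    obtain ⟨t, u', rfl, h1, h2, h3, h4⟩ := hu.peel
    obtain ⟨s, v', rfl, k1, k2, k3, k4⟩ := hv.peel
    have ht := huW t h3
    have hs := hvW s k3
    have hu' : Has W (n + 1) (t + 2) (M + 1) :=
      ⟨u', h4, fun x hx => huW x (Finset.mem_insert_of_mem hx)⟩
    have hv' : Has W n (s + 2) M :=
      ⟨v', k4, fun x hx => hvW x (Finset.mem_insert_of_mem hx)⟩
    rcases h1.eq_or_lt with rfl | h1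
    · rcases k1.eq_or_lt with rfl | k1
      · rcases ih (p + 2) (by omega) hu' (hv'.mono (fun _ h => h) (by omega) le_rfl) with h | h
        · exact Or.inl (h.cons hs le_rfl (by omega))
        · exact Or.inr (h.cons ht le_rfl (by omega))
      · exact Or.inr ((hv'.cons hs (p := p + 2) k1 k2).cons ht le_rfl (by omega))
    · exact Or.inl (hu'.cons ht h1 h2)

theorem Has.strip {N : ℕ} {u : Finset ℕ} {e : Fin N →₀ ℕ} {n p q : ℕ}
    (hu : ∀ x ∈ u, 1 ≤ x ∧ x ≤ N)
    (h : Has (Wt (chi N u + e)) n p q) (hd : ∀ x ∈ u, p ≤ x → x ≤ q → False) :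
    Has (Wt e) n p q := by
  obtain ⟨T, hT, hTW⟩ := h
  refine ⟨T, hT, fun x hx => ?_⟩
  rcases (Wt_add _ _ _).1 (hTW x hx) with h | h
  · have := hT.2.1 x hx
    exact (hd x ((Wt_chi u hu x).1 h) this.1 this.2).elim
  · exact h

open MvPolynomial in
theorem mul_XS_forall {k : Type*} [Field k] {N : ℕ} (u : Finset ℕ) (f : MvPolynomial (Fin N) k)
    (Q : (Fin N →₀ ℕ) → Prop) :
    (∀ e, coeff e (XS k N u * f) ≠ 0 → Q e) ↔ ∀ e, coeff e f ≠ 0 → Q (chi N u + e) := by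
  constructor
  · intro h e he
    exact h _ (by rwa [coeff_XS_mul])
  · intro h e he
    rw [XS, coeff_monomial_mul'] at he
    split_ifs at he with hle
    · obtain ⟨w, rfl⟩ := exists_add_of_le hle
      refine h w ?_
      simpa using he
    · exact absurd rfl he

open MvPolynomial in
theorem mem_II (k : Type*) [Field k] (N n p q p' q' : ℕ) (hn : 1 ≤ n) (hp : 1 ≤ p) (hq : q ≤ N)
    (hp' : 1 ≤ p') (hq' : q' ≤ N) (f : MvPolynomial (Fin N) k) :
    f ∈ idealI k N n p q + idealI k N n p' q' ↔
      ∀ e, coeff e f ≠ 0 → Has (Wt e) n p q ∨ Has (Wt e) n p' q' := by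
  constructor
  · intro hf e he
    obtain ⟨g, hg, h, hh, rfl⟩ := Submodule.mem_sup.1 hf
    rw [mem_idealI k N n p q hn hp hq] at hg
    rw [mem_idealI k N n p' q' hn hp' hq'] at hh
    rw [coeff_add] at he
    by_cases h0 : coeff e g = 0
    · exact Or.inr (hh e (by simpa [h0] using he))
    · exact Or.inl (hg e h0)
  · intro h
    rw [f.as_sum]
    refine Ideal.sum_mem _ fun e he => ?_
    have key : ∀ e', coeff e' (monomial e (coeff e f)) ≠ 0 → e' = e := by
      intro e' h1
      classical
      rw [coeff_monomial] at h1
      by_contra hne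
      exact h1 (if_neg (Ne.symm hne))
    rcases h e (mem_support_iff.1 he) with h1 | h1
    · refine Ideal.mem_sup_left ?_
      rw [mem_idealI k N n p q hn hp hq]
      intro e' he'
      rw [key e' he']; exact h1
    · refine Ideal.mem_sup_right ?_
      rw [mem_idealI k N n p' q' hn hp' hq']
      intro e' he'
      rw [key e' he']; exact h1

open MvPolynomial in
theorem main_seq (k : Type*) [Field k] (b M : ℕ) (hb : 1 ≤ b) (hM : 2 * b + 2 ≤ M)
    (I J : Ideal (MvPolynomial (Fin (M + 3)) k))
    (hI : I = idealI k (M + 3) (b + 2) 1 (M + 1) + idealI k (M + 3) (b + 2) 2 (M + 2))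
    (hJ : J = idealI k (M + 3) (b + 1) 2 (M + 1) +
      Ideal.span {Xv k (M + 3) (M + 3)} * idealI k (M + 3) b 3 M)
    (Jbar : Ideal (MvPolynomial (Fin (M + 3)) k ⧸ I))
    (hJbar : Jbar = J.map (Ideal.Quotient.mk I))
    (Θ : (MvPolynomial (Fin (M + 3)) k ⧸ I) →ₗ[MvPolynomial (Fin (M + 3)) k ⧸ I]
      (Jbar →ₗ[MvPolynomial (Fin (M + 3)) k ⧸ I] MvPolynomial (Fin (M + 3)) k ⧸ I))
    (hΘ : ∀ (r : MvPolynomial (Fin (M + 3)) k ⧸ I) (u : Jbar),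
      Θ r u = r * (u : MvPolynomial (Fin (M + 3)) k ⧸ I)) :
    Function.Injective Θ ∧
    Nonempty (((Jbar →ₗ[MvPolynomial (Fin (M + 3)) k ⧸ I]
        MvPolynomial (Fin (M + 3)) k ⧸ I) ⧸ LinearMap.range Θ)
      ≃ₗ[MvPolynomial (Fin (M + 3)) k ⧸ I]
        ((MvPolynomial (Fin (M + 3)) k ⧸ I) ⧸ Jbar)) := by
  have mI : ∀ f, f ∈ I ↔ ∀ e, coeff e f ≠ 0 → Has (Wt e) (b + 2) 1 (M + 1) ∨
      Has (Wt e) (b + 2) 2 (M + 2) := fun f => by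
    rw [hI]; exact mem_II k (M + 3) (b + 2) 1 (M + 1) 2 (M + 2) (by omega) (by omega) (by omega)
      (by omega) (by omega) f
  have mI' := mem_idealI k (M + 3) (b + 2) 1 (M + 2) (by omega) (by omega) (by omega)
  have mA := mem_idealI k (M + 3) (b + 1) 2 (M + 1) (by omega) (by omega) (by omega)
  have mB := mem_idealI k (M + 3) b 3 M (by omega) (by omega) (by omega)
  have by1 : ∀ x ∈ ({1, M + 2} : Finset ℕ), 1 ≤ x ∧ x ≤ M + 3 := by
    intro x hx
    simp only [Finset.mem_insert, Finset.mem_singleton] at hx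
    omega
  have bz1 : ∀ x ∈ ({M + 3} : Finset ℕ), 1 ≤ x ∧ x ≤ M + 3 := by
    intro x hx
    simp only [Finset.mem_singleton] at hx
    omega
  have hy : Xv k (M + 3) 1 * Xv k (M + 3) (M + 2) = XS k (M + 3) {1, M + 2} := by
    rw [← prod_Xv _ _ _ by1, Finset.prod_pair (by omega)]
  have hz : Xv k (M + 3) (M + 3) = XS k (M + 3) {M + 3} := by
    rw [← prod_Xv _ _ _ bz1, Finset.prod_singleton]
  have H1 : I ≤ idealI k (M + 3) (b + 1) 2 (M + 1) := by
    intro f hf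
    rw [mI] at hf
    rw [mA]
    intro e he
    rcases hf e he with h | h
    · exact h.drop_first.mono (fun _ h => h) (by omega) le_rfl
    · exact h.drop_last.mono (fun _ h => h) le_rfl (by omega)
  have H1' : I ≤ idealI k (M + 3) (b + 2) 1 (M + 2) := by
    intro f hf
    rw [mI] at hf
    rw [mI']
    intro e he
    rcases hf e he with h | h
    · exact h.mono (fun _ h => h) (by omega) (by omega)
    · exact h.mono (fun _ h => h) (by omega) le_rfl
  have yIA : ∀ f, Xv k (M + 3) 1 * Xv k (M + 3) (M + 2) * f ∈ I →
      f ∈ idealI k (M + 3) (b + 1) 2 (M + 1) := by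
    intro f hf
    rw [hy, mI, mul_XS_forall] at hf
    rw [mA]
    intro e he
    rcases hf e he with h | h
    · refine (h.drop_first.strip by1 ?_).mono (fun _ h => h) (by omega) le_rfl
      intro x hx
      simp only [Finset.mem_insert, Finset.mem_singleton] at hx
      omega
    · refine (h.drop_last.strip by1 ?_).mono (fun _ h => h) le_rfl (by omega)
      intro x hx
      simp only [Finset.mem_insert, Finset.mem_singleton] at hx
      omega
  refine abstract_seq I (idealI k (M + 3) (b + 1) 2 (M + 1)) (idealI k (M + 3) b 3 M)
    (idealI k (M + 3) (b + 2) 1 (M + 2)) J (Xv k (M + 3) 1 * Xv k (M + 3) (M + 2))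
    (Xv k (M + 3) (M + 3)) hJ H1 H1' ?_ ?_ ?_ ?_ ?_ ?_ ?_ ?_ ?_ Jbar hJbar Θ hΘ
  · intro r hr
    refine ann_ideal k (n := b + 1) (p := 1) (r := M + 1) le_rfl (by omega) (by omega) r
      fun u hu => ?_
    rw [mul_comm]
    exact H1' (hr _ (XS_mem k (by omega) (by omega) (by omega) hu))
  · have le : idealI k (M + 3) (b + 2) 1 (M + 2) ≤
        I ⊔ Ideal.span {Xv k (M + 3) 1 * Xv k (M + 3) (M + 2)} * idealI k (M + 3) b 3 M := by
      rw [idealI_eq k (M + 3) (b + 2) 1 (M + 2) (by omega) (by omega) (by omega), Ideal.span_le]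
      rintro _ ⟨_, ⟨u, hu, rfl⟩, rfl⟩
      change XS k (M + 3) u ∈ _
      by_cases h1 : 1 ∈ u
      · by_cases h2 : M + 2 ∈ u
        · refine Ideal.mem_sup_right ?_
          have h3 : M + 2 ∈ u.erase 1 := Finset.mem_erase.2 ⟨by omega, h2⟩
          rw [← prod_Xv k (M + 3) u (fun x hx => by have := hu.2.1 x hx; omega),
            ← Finset.mul_prod_erase _ _ h1, ← Finset.mul_prod_erase _ _ h3, ← mul_assoc]
          refine Ideal.mul_mem_mul (Ideal.mem_span_singleton_self _) ?_
          have hsp : Sp b 3 M ((u.erase 1).erase (M + 2)) := by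
            refine ⟨?_, ?_, ?_⟩
            · rw [Finset.card_erase_of_mem h3, Finset.card_erase_of_mem h1, hu.1]; omega
            · intro x hx
              simp only [Finset.mem_erase] at hx
              have a1 := hu.2.1 x hx.2.2
              have a2 := hu.2.2 1 h1 x hx.2.2 (by omega)
              have a3 := hu.2.2 x hx.2.2 _ h2 (by omega)
              omega
            · intro x hx x' hx'
              exact hu.2.2 x (Finset.mem_of_mem_erase (Finset.mem_of_mem_erase hx)) x'
                (Finset.mem_of_mem_erase (Finset.mem_of_mem_erase hx'))
          rw [prod_Xv k (M + 3) _ (fun x hx => by have := hsp.2.1 x hx; omega)]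
          exact XS_mem k (by omega) (by omega) (by omega) hsp
        · refine Ideal.mem_sup_left ?_
          rw [hI]
          refine Ideal.mem_sup_left (XS_mem k (by omega) (by omega) (by omega) ?_)
          refine hu.mono (fun x hx => (hu.2.1 x hx).1) fun x hx => ?_
          have := (hu.2.1 x hx).2
          have : x ≠ M + 2 := fun h => h2 (h ▸ hx)
          omega
      · refine Ideal.mem_sup_left ?_
        rw [hI]
        refine Ideal.mem_sup_right (XS_mem k (by omega) (by omega) (by omega) ?_)
        refine hu.mono (fun x hx => ?_) fun x hx => (hu.2.1 x hx).2
        have := (hu.2.1 x hx).1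
        have : x ≠ 1 := fun h => h1 (h ▸ hx)
        omega
    intro r hr
    obtain ⟨i, hi, w, hw, rfl⟩ := Submodule.mem_sup.1 (le hr)
    obtain ⟨v, hv, rfl⟩ := Ideal.mem_span_singleton_mul.1 hw
    exact ⟨v, hv, by simpa using hi⟩
  · intro r hr
    refine ann_ideal k (n := b) (p := 2) (r := M) (by omega) (by omega) (by omega) r
      fun u hu => ?_
    refine yIA _ ?_
    rw [mul_comm (XS k (M + 3) u), ← mul_assoc]
    exact hr _ (XS_mem k (by omega) (by omega) (by omega) hu)
  · intro v hvA hvB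
    rw [mA] at hvA
    rw [mB] at hvB
    rw [hy, mI, mul_XS_forall]
    intro e he
    have hsub : ∀ x ∈ Wt e, x ∈ Wt (chi (M + 3) {1, M + 2} + e) := fun x hx =>
      (Wt_add _ _ _).2 (Or.inr hx)
    have hin : ∀ x ∈ ({1, M + 2} : Finset ℕ), x ∈ Wt (chi (M + 3) {1, M + 2} + e) := fun x hx =>
      (Wt_add _ _ _).2 (Or.inl ((Wt_chi _ by1 x).2 hx))
    rcases has_pair b 2 (by omega) (hvA e he) (hvB e he) with h | h
    · exact Or.inl ((h.mono hsub le_rfl le_rfl).cons (t := 1) (hin 1 (by simp)) le_rfl (by omega))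
    · exact Or.inr ((h.mono hsub le_rfl le_rfl).snoc (t := M + 2) (hin _ (by simp)) le_rfl (by omega))
  · intro v hv
    rw [hy, mA, mul_XS_forall] at hv
    rw [mA]
    intro e he
    refine (hv e he).strip by1 ?_
    intro x hx
    simp only [Finset.mem_insert, Finset.mem_singleton] at hx
    omega
  · intro v hv
    rw [hz, mA, mul_XS_forall] at hv
    rw [mA]
    intro e he
    refine (hv e he).strip bz1 ?_
    intro x hx
    simp only [Finset.mem_singleton] at hx
    omega
  · intro v hv
    rw [hz, mI, mul_XS_forall] at hv
    rw [mI]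
    intro e he
    rcases hv e he with h | h
    · refine Or.inl (h.strip bz1 ?_)
      intro x hx
      simp only [Finset.mem_singleton] at hx
      omega
    · refine Or.inr (h.strip bz1 ?_)
      intro x hx
      simp only [Finset.mem_singleton] at hx
      omega
  · intro g
    exact homP k (n := b + 1) (p := 1) (r := M + 1) (by omega) le_rfl (by omega) (by omega) g
  · intro g
    exact homP k (n := b) (p := 2) (r := M) hb (by omega) (by omega) (by omega) g

/-- For `d ≥ 4` even, `d + 1 < m`, `a = (d+2)/2`: with `R = k[x_1,…,x_m,z]` (`z` the last
variable), `I = I_{a,1,m−1} + I_{a,2,m}`, `J = I_{a−1,2,m−1} + z·I_{a−2,3,m−2}`, and `J̄`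
the image of `J` in `R/I`, the `R/I`-linear map `Θ : R/I → Hom_{R/I}(J̄, R/I)` sending `r`
to multiplication by `r` is injective, and its cokernel is isomorphic as an `R/I`-module to
`R/J` (realized as `(R/I)/J̄`). -/
theorem hom_module_exact_sequence_even (k : Type*) [Field k] (d m : ℕ)
    (hd : Even d) (hd4 : 4 ≤ d) (hm : d + 1 < m) (a : ℕ) (ha : a = (d + 2) / 2)
    (I J : Ideal (MvPolynomial (Fin (m + 1)) k))
    (hI : I = idealI k (m + 1) a 1 (m - 1) + idealI k (m + 1) a 2 m)
    (hJ : J = idealI k (m + 1) (a - 1) 2 (m - 1) +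
      Ideal.span {Xv k (m + 1) (m + 1)} * idealI k (m + 1) (a - 2) 3 (m - 2))
    (Jbar : Ideal (MvPolynomial (Fin (m + 1)) k ⧸ I))
    (hJbar : Jbar = J.map (Ideal.Quotient.mk I))
    (Θ : (MvPolynomial (Fin (m + 1)) k ⧸ I) →ₗ[MvPolynomial (Fin (m + 1)) k ⧸ I]
      (Jbar →ₗ[MvPolynomial (Fin (m + 1)) k ⧸ I] MvPolynomial (Fin (m + 1)) k ⧸ I))
    (hΘ : ∀ (r : MvPolynomial (Fin (m + 1)) k ⧸ I) (u : Jbar),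
      Θ r u = r * (u : MvPolynomial (Fin (m + 1)) k ⧸ I)) :
    Function.Injective Θ ∧
    Nonempty (((Jbar →ₗ[MvPolynomial (Fin (m + 1)) k ⧸ I]
        MvPolynomial (Fin (m + 1)) k ⧸ I) ⧸ LinearMap.range Θ)
      ≃ₗ[MvPolynomial (Fin (m + 1)) k ⧸ I]
        ((MvPolynomial (Fin (m + 1)) k ⧸ I) ⧸ Jbar)) := by
  obtain ⟨c, rfl⟩ := hd
  obtain ⟨b, rfl⟩ : ∃ b, c = b + 1 := ⟨c - 1, by omega⟩
  obtain ⟨M, rfl⟩ : ∃ M, m = M + 2 := ⟨m - 2, by omega⟩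
  obtain rfl : a = b + 2 := by omega
  exact main_seq k b M (by omega) (by omega) I J hI hJ Jbar hJbar Θ hΘ
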